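/- There exists a constant C>0 such that, for all r≥1 and all b>0, g(b) ≤ e_D(b,r)/r² ≤ g(b) + C √b / r. (For b∈(0,1) this is the estimate of Fournais–Kachmar; for b≥1 it holds trivially since g(b)=0 and e_D(b,r)=0.) -/

import Mathlib

open MeasureTheory Real Set Filter Topology

noncomputable section

/-- The open square `Q_r = (-r/2, r/2) × (-r/2, r/2)`. -/
def Qsq (r : ℝ) : Set (ℝ × ℝ) := Ioo (-r/2) (r/2) ×ˢ Ioo (-r/2) (r/2)

/-- The vertical strip `S_R = (-R/2, R/2) × ℝ`. -/
def Strip (R : ℝ) : Set (ℝ × ℝ) := Ioo (-R/2) (R/2) ×ˢ (univ : Set ℝ)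

/-- The magnetic potential `A₀(x) = (-x₂/2, x₁/2)` of the constant unit magnetic field. -/
def A₀ (x : ℝ × ℝ) : ℝ × ℝ := (-x.2 / 2, x.1 / 2)

/-- The magnetic potential `A_van(x) = (-x₂²/2, 0)` generating the field `B(x) = x₂`. -/
def Avan (x : ℝ × ℝ) : ℝ × ℝ := (-x.2 ^ 2 / 2, 0)

/-- The magnetic gradient energy density `|(∇ - iA)u|²` at `x`. -/
def magGradSq (A : ℝ × ℝ → ℝ × ℝ) (u : ℝ × ℝ → ℂ) (x : ℝ × ℝ) : ℝ :=
  ‖fderiv ℝ u x (1, 0) - Complex.I * ((A x).1 : ℂ) * u x‖ ^ 2 +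
  ‖fderiv ℝ u x (0, 1) - Complex.I * ((A x).2 : ℂ) * u x‖ ^ 2

/-- The Ginzburg–Landau functional `F_{b,Q_r}` on the square `Q_r`. -/
def Fsq (b r : ℝ) (u : ℝ × ℝ → ℂ) : ℝ :=
  ∫ x in Qsq r, (b * magGradSq A₀ u x - ‖u x‖ ^ 2 + ‖u x‖ ^ 4 / 2)

/-- (Smooth surrogate of) membership in `H¹(Q_r; ℂ)`. -/
def MemH1sq (u : ℝ × ℝ → ℂ) : Prop := ContDiff ℝ 1 u

/-- (Smooth surrogate of) membership in `H¹₀(Q_r; ℂ)`: vanishing on the boundary. -/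
def MemH10sq (r : ℝ) (u : ℝ × ℝ → ℂ) : Prop :=
  ContDiff ℝ 1 u ∧ ∀ x ∈ frontier (Qsq r), u x = 0

/-- The Dirichlet ground-state energy `e_D(b, r)`. -/
def eD (b r : ℝ) : ℝ := sInf (Fsq b r '' {u | MemH10sq r u})

/-- The Neumann ground-state energy `e_N(b, r)`. -/
def eN (b r : ℝ) : ℝ := sInf (Fsq b r '' {u | MemH1sq u})

/-- The energy density of the strip functional `𝓔_{L,R}` at `x`. -/
def stripDensity (L : ℝ) (u : ℝ × ℝ → ℂ) (x : ℝ × ℝ) : ℝ :=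
  magGradSq Avan u x - L ^ (-(2:ℝ)/3) * ‖u x‖ ^ 2 + (L ^ (-(2:ℝ)/3) / 2) * ‖u x‖ ^ 4

/-- The strip functional `𝓔_{L,R}`. -/
def Estrip (L R : ℝ) (u : ℝ × ℝ → ℂ) : ℝ := ∫ x in Strip R, stripDensity L u x

/-- (Surrogate of) membership in the space `H¹_{mag,0}(S_R)`. -/
def MemH1mag0 (R : ℝ) (u : ℝ × ℝ → ℂ) : Prop :=
  ContDiff ℝ 1 u ∧
  IntegrableOn (fun x => ‖u x‖ ^ 2) (Strip R) ∧
  IntegrableOn (magGradSq Avan u) (Strip R) ∧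
  IntegrableOn (fun x => ‖u x‖ ^ 4) (Strip R) ∧
  ∀ x ∈ frontier (Strip R), u x = 0

/-- The ground-state energy `e_gs(L; R)` of the strip functional. -/
def egs (L R : ℝ) : ℝ := sInf (Estrip L R '' {u | MemH1mag0 R u})

/-- `g : (0,∞) → ℝ` is the thermodynamic limit of the Dirichlet square energies. -/
def IsLimitG (g : ℝ → ℝ) : Prop :=
  ∀ b > 0, Tendsto (fun r => eD b r / r ^ 2) atTop (nhds (g b))

/-- `E : (0,∞) → ℝ` is the large-`R` limit of the strip energies. -/
def IsLimitE (E : ℝ → ℝ) : Prop :=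
  ∀ L > 0, Tendsto (fun R => egs L R / R) atTop (nhds (E L))

/-!
`A₀` is additive, so magnetic translations carry trial states from one position to another without
changing their energy. Packing `n²` translates of a near-minimiser on `Q_r` into `Q_{nr}` gives
`e_D(b, nr) ≤ n² e_D(b, r)`, hence `g(b) ≤ e_D(b, r) / r²`.

For the upper bound, a near-minimiser `v` on a huge square is translated to all positions, cut down
to `Q_r` by a fixed real cutoff `χ`, and the resulting energies are averaged. The first-order cross
terms `χ ∂χ ∂|v|²` integrate to zero, and `-1/2 ≤ g(b) ≤ 0`, so
`e_D(b, r) ≤ r² g(b) + ½ ∫ (1 - χ²) + 2 b ∫ |∇χ|²`. A boundary layer of width `√b` balances the two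
errors at `O(r √b)`. When `r ≤ √b` there is no room for the layer, but then the trivial bounds
`e_D(b, r) ≤ 0` and `-1/2 ≤ g(b)` suffice.

Approximating by compactly supported functions needs no dilation of the square: it is enough to
truncate the values of a trial state near `0`, since it vanishes on the boundary.
-/

/-! ### Integration over balls -/

lemma integrableOn_of_continuous_of_isBounded {X F : Type*} [PseudoMetricSpace X] [ProperSpace X]
    [MeasurableSpace X] [OpensMeasurableSpace X] [NormedAddCommGroup F] {μ : Measure X}
    [IsLocallyFiniteMeasure μ] {f : X → F} (hf : Continuous f) {s : Set X}
    (hs : Bornology.IsBounded s) : IntegrableOn f s μ :=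
  (hf.locallyIntegrable.integrableOn_isCompact hs.isCompact_closure).mono_set subset_closure

lemma integrable_sub_prod_restrict {E F : Type*} [NormedAddCommGroup E] [ProperSpace E]
    [MeasurableSpace E] [BorelSpace E] [NormedAddCommGroup F] {μ : Measure E}
    [IsFiniteMeasureOnCompacts μ] {K : E → E → F}
    (hK : Continuous fun p : E × E => K p.1 p.2) {s t : Set E} (hs : Bornology.IsBounded s)
    (ht : Bornology.IsBounded t) :
    Integrable (fun p : E × E => K p.2 (p.2 - p.1)) ((μ.restrict s).prod (μ.restrict t)) := by
  rw [Measure.prod_restrict]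
  exact integrableOn_of_continuous_of_isBounded
    (hK.comp (continuous_snd.prodMk (continuous_snd.sub continuous_fst))) (hs.prod ht)

lemma setIntegral_ball_setIntegral_ball_sub {E F : Type*} [NormedAddCommGroup E] [ProperSpace E]
    [MeasurableSpace E] [BorelSpace E] [NormedAddCommGroup F] [NormedSpace ℝ F] {μ : Measure E}
    [μ.IsAddLeftInvariant] [μ.IsNegInvariant] [IsFiniteMeasureOnCompacts μ]
    {K : E → E → F} (hK : Continuous fun p : E × E => K p.1 p.2) {ρ R : ℝ}
    (hsupp : ∀ x z, z ∉ Metric.ball 0 R → K x z = 0) :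
    ∫ y in Metric.ball 0 (ρ + R), ∫ x in Metric.ball 0 ρ, K x (x - y) ∂μ ∂μ =
      ∫ x in Metric.ball 0 ρ, ∫ z, K x z ∂μ ∂μ := by
  rw [integral_integral_swap
    (integrable_sub_prod_restrict hK Metric.isBounded_ball Metric.isBounded_ball)]
  refine setIntegral_congr_fun Metric.isOpen_ball.measurableSet fun x hx => ?_
  rw [← integral_sub_left_eq_self (K x) μ x]
  refine setIntegral_eq_integral_of_forall_compl_eq_zero fun y hy => hsupp _ _ fun hxy => hy ?_
  rw [mem_ball_zero_iff] at hx hxy ⊢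
  calc ‖y‖ = ‖x - (x - y)‖ := by rw [sub_sub_cancel]
    _ ≤ ‖x‖ + ‖x - y‖ := norm_sub_le _ _
    _ < ρ + R := add_lt_add hx hxy

lemma integral_fderiv_apply_eq_zero {E : Type*} [NormedAddCommGroup E] [NormedSpace ℝ E]
    [FiniteDimensional ℝ E] [MeasurableSpace E] [BorelSpace E] {μ : Measure E} [μ.IsAddHaarMeasure]
    {f : E → ℝ} (hf : ContDiff ℝ 1 f) (hsupp : HasCompactSupport f) (e : E) :
    ∫ x, fderiv ℝ f x e ∂μ = 0 := by
  have hf' : Integrable (fun x => fderiv ℝ f x e) μ :=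
    ((hf.continuous_fderiv one_ne_zero).clm_apply continuous_const).integrable_of_hasCompactSupport
      (hsupp.fderiv_apply ℝ e)
  simpa using integral_mul_fderiv_eq_neg_fderiv_mul_of_integrable (μ := μ) (f := fun _ => (1 : ℝ))
    (g := f) (v := e) (by simp) (by simpa using hf')
    (by simpa using hf.continuous.integrable_of_hasCompactSupport hsupp)
    (fun _ _ => differentiableAt_const _) fun x _ => hf.differentiable one_ne_zero x

/-! ### The Ginzburg–Landau density -/

/-- The covariant derivative `(∂_e - i A·e) u` at `x` in the direction `e`. -/
def covDeriv (A : ℝ × ℝ → ℝ × ℝ) (u : ℝ × ℝ → ℂ) (x e : ℝ × ℝ) : ℂ :=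
  fderiv ℝ u x e - Complex.I * (((A x).1 * e.1 + (A x).2 * e.2 : ℝ) : ℂ) * u x

/-- The Ginzburg–Landau energy density `b |(∇ - iA)u|² - |u|² + |u|⁴ / 2` at `x`, for a general
magnetic potential `A`. -/
def glDensity (A : ℝ × ℝ → ℝ × ℝ) (b : ℝ) (u : ℝ × ℝ → ℂ) (x : ℝ × ℝ) : ℝ :=
  b * magGradSq A u x - ‖u x‖ ^ 2 + ‖u x‖ ^ 4 / 2

/-- The space `C¹_c(Ω; ℂ)` of compactly supported test functions. -/
structure MemC1c (Ω : Set (ℝ × ℝ)) (u : ℝ × ℝ → ℂ) : Prop where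
  contDiff : ContDiff ℝ 1 u
  hasCompactSupport : HasCompactSupport u
  tsupport_subset : tsupport u ⊆ Ω

section Density

variable {A : ℝ × ℝ → ℝ × ℝ} {b : ℝ} {Ω : Set (ℝ × ℝ)} {u v : ℝ × ℝ → ℂ} {x : ℝ × ℝ}

lemma magGradSq_eq_covDeriv (A : ℝ × ℝ → ℝ × ℝ) (u : ℝ × ℝ → ℂ) (x : ℝ × ℝ) :
    magGradSq A u x = ‖covDeriv A u x (1, 0)‖ ^ 2 + ‖covDeriv A u x (0, 1)‖ ^ 2 := by
  simp [magGradSq, covDeriv]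

lemma magGradSq_nonneg (A : ℝ × ℝ → ℝ × ℝ) (u : ℝ × ℝ → ℂ) (x : ℝ × ℝ) : 0 ≤ magGradSq A u x := by
  unfold magGradSq; positivity

lemma continuous_covDeriv (hu : ContDiff ℝ 1 u) (hA : Continuous A) (e : ℝ × ℝ) :
    Continuous fun x => covDeriv A u x e := by
  have := hu.continuous
  have := (hu.continuous_fderiv one_ne_zero).clm_apply (continuous_const (y := e))
  unfold covDeriv
  fun_prop

lemma continuous_glDensity (hA : Continuous A) (b : ℝ) (hu : ContDiff ℝ 1 u) :
    Continuous (glDensity A b u) := by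
  have := hu.continuous
  have := continuous_covDeriv hu hA
  unfold glDensity
  simp only [magGradSq_eq_covDeriv]
  fun_prop

lemma glDensity_congr (h : u =ᶠ[𝓝 x] v) : glDensity A b u x = glDensity A b v x := by
  simp only [glDensity, magGradSq, h.fderiv_eq, h.eq_of_nhds]

lemma glDensity_zero : glDensity A b 0 x = 0 := by
  simp [glDensity, magGradSq]

lemma glDensity_of_notMem_tsupport (hx : x ∉ tsupport u) : glDensity A b u x = 0 :=
  (glDensity_congr (notMem_tsupport_iff_eventuallyEq.1 hx)).trans glDensity_zero

lemma neg_half_le_glDensity (hb : 0 ≤ b) : -(1 / 2) ≤ glDensity A b u x := by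
  have := mul_nonneg hb (magGradSq_nonneg A u x)
  unfold glDensity
  linarith [sq_nonneg (‖u x‖ ^ 2 - 1)]

lemma normSq_sub_two_le_glDensity (hb : 0 ≤ b) : ‖u x‖ ^ 2 - 2 ≤ glDensity A b u x := by
  have := mul_nonneg hb (magGradSq_nonneg A u x)
  unfold glDensity
  linarith [sq_nonneg (‖u x‖ ^ 2 - 2)]

lemma abs_glDensity_le (hb : 0 ≤ b) :
    |glDensity A b u x| ≤ b * magGradSq A u x + ‖u x‖ ^ 2 + ‖u x‖ ^ 4 := by
  have := mul_nonneg hb (magGradSq_nonneg A u x)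
  have := sq_nonneg ‖u x‖
  have : 0 ≤ ‖u x‖ ^ 4 := by positivity
  rw [glDensity, abs_le]
  constructor <;> linarith

lemma glDensity_sum {ι : Type*} [Fintype ι] {f : ι → ℝ × ℝ → ℂ}
    (hf : Pairwise fun i j => Disjoint (tsupport (f i)) (tsupport (f j))) (x : ℝ × ℝ) :
    glDensity A b (∑ i, f i) x = ∑ i, glDensity A b (f i) x := by
  by_cases h : ∃ i, x ∈ tsupport (f i)
  · obtain ⟨i, hi⟩ := h
    have hne : ∀ j ≠ i, x ∉ tsupport (f j) := fun j hj => disjoint_right.1 (hf hj) hi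
    have hev : ∑ j, f j =ᶠ[𝓝 x] f i := by
      have : ∀ᶠ z in 𝓝 x, ∀ j, j ≠ i → f j z = 0 := eventually_all.2 fun j =>
        eventually_imp_distrib_left.2 fun hj => notMem_tsupport_iff_eventuallyEq.1 (hne j hj)
      filter_upwards [this] with z hz
      rw [Finset.sum_apply]
      exact Finset.sum_eq_single i (fun j _ => hz j) (by simp)
    rw [glDensity_congr hev, Finset.sum_eq_single i
      (fun j _ hj => glDensity_of_notMem_tsupport (hne j hj)) (by simp)]
  · push Not at h
    have hev : ∑ j, f j =ᶠ[𝓝 x] 0 := by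
      filter_upwards [eventually_all.2 fun j => notMem_tsupport_iff_eventuallyEq.1 (h j)] with z hz
      rw [Finset.sum_apply]
      exact Finset.sum_eq_zero fun j _ => hz j
    rw [glDensity_congr hev, glDensity_zero,
      Finset.sum_eq_zero fun j _ => glDensity_of_notMem_tsupport (h j)]

lemma MemC1c.integrable_glDensity (hu : MemC1c Ω u) (hA : Continuous A) (b : ℝ) :
    Integrable (glDensity A b u) :=
  (continuous_glDensity hA b hu.contDiff).integrable_of_hasCompactSupport <|
    HasCompactSupport.intro hu.hasCompactSupport fun _ => glDensity_of_notMem_tsupport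

lemma MemC1c.setIntegral_glDensity (hu : MemC1c Ω u) :
    ∫ x in Ω, glDensity A b u x = ∫ x, glDensity A b u x :=
  setIntegral_eq_integral_of_forall_compl_eq_zero fun _ hx =>
    glDensity_of_notMem_tsupport fun h => hx (hu.tsupport_subset h)

lemma MemC1c.eq_zero_of_notMem (hu : MemC1c Ω u) (hx : x ∉ Ω) : u x = 0 :=
  image_eq_zero_of_notMem_tsupport fun h => hx (hu.tsupport_subset h)

lemma MemC1c.mono {Ω' : Set (ℝ × ℝ)} (hu : MemC1c Ω u) (h : Ω ⊆ Ω') : MemC1c Ω' u :=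
  ⟨hu.contDiff, hu.hasCompactSupport, hu.tsupport_subset.trans h⟩

lemma MemC1c.sum {ι : Type*} {s : Finset ι} {f : ι → ℝ × ℝ → ℂ} (hf : ∀ i ∈ s, MemC1c Ω (f i)) :
    MemC1c Ω (∑ i ∈ s, f i) := by
  refine Finset.sum_induction f (MemC1c Ω) (fun v w hv hw => ?_) ?_ hf
  · exact ⟨hv.contDiff.add hw.contDiff, hv.hasCompactSupport.add hw.hasCompactSupport,
      (tsupport_add v w).trans (union_subset hv.tsupport_subset hw.tsupport_subset)⟩
  · exact ⟨contDiff_const, .zero, by simp⟩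

end Density

/-! ### Approximation by compactly supported functions -/

lemma exists_contDiff_lipschitzWith_eventuallyEq_id (E : Type*) [NormedAddCommGroup E]
    [NormedSpace ℝ E] [FiniteDimensional ℝ E] :
    ∃ (φ : ℕ → E → E) (K : NNReal), (∀ n, ContDiff ℝ 1 (φ n)) ∧ (∀ n, LipschitzWith K (φ n)) ∧
      (∀ n, φ n =ᶠ[𝓝 0] 0) ∧ ∀ z ≠ 0, ∀ᶠ n in atTop, φ n =ᶠ[𝓝 z] id := by
  let f : ContDiffBump (0 : E) := ⟨1, 2, one_pos, one_lt_two⟩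
  have hfs : ContDiff ℝ 1 fun z => f z • z := f.contDiff.smul contDiff_id
  obtain ⟨K, hK⟩ := hfs.lipschitzWith_of_hasCompactSupport
    (f.hasCompactSupport.smul_right (f' := id)) one_ne_zero
  let ψ : E → E := fun z => z - f z • z
  have hψ : ContDiff ℝ 1 ψ := contDiff_id.sub hfs
  have hψK : LipschitzWith (1 + K) ψ := LipschitzWith.id.sub hK
  have scale (n : ℕ) : (0 : ℝ) < n + 1 := n.cast_add_one_pos
  have hcont (n : ℕ) : Continuous fun z : E => ((n : ℝ) + 1) • z := continuous_const_smul _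
  refine ⟨fun n z => ((n : ℝ) + 1)⁻¹ • ψ (((n : ℝ) + 1) • z), 1 + K, fun n => ?_, fun n => ?_,
    fun n => ?_, fun z hz => ?_⟩
  · exact contDiff_const.smul (hψ.comp (contDiff_const.smul contDiff_id))
  · refine LipschitzWith.of_dist_le_mul fun z w => ?_
    rw [dist_smul₀, norm_inv, Real.norm_of_nonneg (scale n).le, inv_mul_le_iff₀ (scale n)]
    refine (hψK.dist_le_mul _ _).trans_eq ?_
    rw [dist_smul₀, Real.norm_of_nonneg (scale n).le]
    ring
  · have h1 : Metric.ball (0 : E) 1 ∈ 𝓝 (((n : ℝ) + 1) • (0 : E)) := by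
      rw [smul_zero]; exact Metric.ball_mem_nhds _ one_pos
    filter_upwards [(hcont n).continuousAt h1] with z hz
    have : f (((n : ℝ) + 1) • z) = 1 := f.one_of_mem_closedBall (Metric.ball_subset_closedBall hz)
    simp [ψ, this]
  · have hlarge : ∀ᶠ n : ℕ in atTop, 2 < ((n : ℝ) + 1) * ‖z‖ :=
      ((tendsto_natCast_atTop_atTop.atTop_add tendsto_const_nhds).atTop_mul_const
        (norm_pos_iff.2 hz)).eventually_gt_atTop 2
    filter_upwards [hlarge] with n hn
    have h2 : ∀ᶠ w in 𝓝 z, 2 < ((n : ℝ) + 1) * ‖w‖ :=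
      (continuous_const.mul continuous_norm).continuousAt.eventually (lt_mem_nhds hn)
    filter_upwards [h2] with w hw
    have : f (((n : ℝ) + 1) • w) = 0 := f.zero_of_le_dist (by
      rw [dist_zero_right, norm_smul, Real.norm_of_nonneg (scale n).le]; exact hw.le)
    simp [ψ, this, smul_smul, inv_mul_cancel₀ (scale n).ne']

section Truncation

variable {A : ℝ × ℝ → ℝ × ℝ} {b c : ℝ} {Ω : Set (ℝ × ℝ)} {u : ℝ × ℝ → ℂ} {φ : ℂ → ℂ}

lemma memC1c_indicator_comp (hΩ : IsOpen Ω) (hΩb : Bornology.IsBounded Ω) (hu : ContDiff ℝ 1 u)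
    (hu0 : ∀ x ∈ frontier Ω, u x = 0) (hφ : ContDiff ℝ 1 φ) (hφ0 : φ =ᶠ[𝓝 0] 0) :
    MemC1c Ω (Ω.indicator (φ ∘ u)) := by
  have hsub : tsupport (Ω.indicator (φ ∘ u)) ⊆ Ω := by
    intro x hx
    by_contra hxΩ
    have hxf : x ∈ frontier Ω := by
      rw [hΩ.frontier_eq]
      exact ⟨closure_mono support_indicator_subset hx, hxΩ⟩
    refine notMem_tsupport_iff_eventuallyEq.2 ?_ hx
    have hux : Tendsto u (𝓝 x) (𝓝 0) := hu0 x hxf ▸ hu.continuous.continuousAt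
    filter_upwards [hux.eventually hφ0] with y hy
    by_cases hyΩ : y ∈ Ω <;> simp_all
  refine ⟨contDiff_iff_contDiffAt.2 fun x => ?_, ?_, hsub⟩
  · by_cases hx : x ∈ Ω
    · refine (hφ.comp hu).contDiffAt.congr_of_eventuallyEq ?_
      filter_upwards [hΩ.mem_nhds hx] with y hy using indicator_of_mem hy _
    · exact contDiffAt_const.congr_of_eventuallyEq
        (notMem_tsupport_iff_eventuallyEq.1 fun h => hx (hsub h))
  · exact hΩb.isCompact_closure.of_isClosed_subset (isClosed_tsupport _)
      (closure_mono support_indicator_subset)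

lemma magGradSq_comp_le {K : NNReal} {x : ℝ × ℝ} (hφ : DifferentiableAt ℝ φ (u x))
    (hK : LipschitzWith K φ) (hφ0 : φ 0 = 0) (hu : DifferentiableAt ℝ u x) :
    magGradSq A (φ ∘ u) x ≤ 2 * (K * (‖fderiv ℝ u x‖ + ‖A x‖ * ‖u x‖)) ^ 2 := by
  have hcomp (e : ℝ × ℝ) (he : ‖e‖ ≤ 1) (a : ℝ) (ha : |a| ≤ ‖A x‖) :
      ‖fderiv ℝ (φ ∘ u) x e - Complex.I * (a : ℂ) * φ (u x)‖ ≤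
        K * (‖fderiv ℝ u x‖ + ‖A x‖ * ‖u x‖) := by
    have h1 : ‖fderiv ℝ (φ ∘ u) x e‖ ≤ K * ‖fderiv ℝ u x‖ := by
      rw [fderiv_comp x hφ hu]
      calc _ ≤ ‖fderiv ℝ φ (u x)‖ * ‖fderiv ℝ u x e‖ := ContinuousLinearMap.le_opNorm _ _
        _ ≤ K * ‖fderiv ℝ u x‖ := by
          gcongr
          · exact norm_fderiv_le_of_lipschitz ℝ hK
          · exact ContinuousLinearMap.unit_le_opNorm _ _ he
    have h2 : ‖Complex.I * (a : ℂ) * φ (u x)‖ ≤ ‖A x‖ * (K * ‖u x‖) := by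
      rw [norm_mul, norm_mul, Complex.norm_I, one_mul, Complex.norm_real, Real.norm_eq_abs]
      gcongr
      simpa [hφ0] using hK.norm_sub_le (u x) 0
    linarith [norm_sub_le (fderiv ℝ (φ ∘ u) x e) (Complex.I * (a : ℂ) * φ (u x))]
  have h1 := hcomp (1, 0) (by simp) (A x).1 (norm_fst_le (A x))
  have h2 := hcomp (0, 1) (by simp) (A x).2 (norm_snd_le (A x))
  calc magGradSq A (φ ∘ u) x
      ≤ (K * (‖fderiv ℝ u x‖ + ‖A x‖ * ‖u x‖)) ^ 2 + (K * (‖fderiv ℝ u x‖ + ‖A x‖ * ‖u x‖)) ^ 2 :=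
        add_le_add (pow_le_pow_left₀ (norm_nonneg _) h1 2) (pow_le_pow_left₀ (norm_nonneg _) h2 2)
    _ = _ := by ring

lemma abs_glDensity_comp_le {K : NNReal} {x : ℝ × ℝ} (hb : 0 ≤ b) (hφ : DifferentiableAt ℝ φ (u x))
    (hK : LipschitzWith K φ) (hφ0 : φ 0 = 0) (hu : DifferentiableAt ℝ u x) :
    |glDensity A b (φ ∘ u) x| ≤ b * (2 * (K * (‖fderiv ℝ u x‖ + ‖A x‖ * ‖u x‖)) ^ 2) +
      (K * ‖u x‖) ^ 2 + (K * ‖u x‖) ^ 4 := by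
  have hφu : ‖(φ ∘ u) x‖ ≤ K * ‖u x‖ := by simpa [hφ0] using hK.norm_sub_le (u x) 0
  refine (abs_glDensity_le hb).trans ?_
  gcongr
  exact magGradSq_comp_le hφ hK hφ0 hu

lemma glDensity_nonneg_of_eq_zero {x : ℝ × ℝ} (hb : 0 ≤ b) (hx : u x = 0) :
    0 ≤ glDensity A b u x := by
  have := mul_nonneg hb (magGradSq_nonneg A u x)
  simpa [glDensity, hx] using this

lemma tendsto_glDensity_comp {φ : ℕ → ℂ → ℂ} {x : ℝ × ℝ} (hφ0 : ∀ n, φ n =ᶠ[𝓝 0] 0)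
    (hφ : ∀ z ≠ 0, ∀ᶠ n in atTop, φ n =ᶠ[𝓝 z] id) (hu : ContinuousAt u x) :
    Tendsto (fun n => glDensity A b (φ n ∘ u) x) atTop
      (𝓝 ({x | u x ≠ 0}.indicator (glDensity A b u) x)) := by
  by_cases hx : u x = 0
  · rw [indicator_of_notMem (by simpa using hx)]
    refine tendsto_const_nhds.congr fun n => ?_
    have hev : φ n ∘ u =ᶠ[𝓝 x] 0 := (hx ▸ hu.tendsto : Tendsto u (𝓝 x) (𝓝 0)).eventually (hφ0 n)
    rw [glDensity_congr hev, glDensity_zero]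
  · rw [indicator_of_mem (by simpa using hx)]
    refine tendsto_const_nhds.congr' ?_
    filter_upwards [hφ _ hx] with n hn
    exact (glDensity_congr (hn.comp_tendsto hu : φ n ∘ u =ᶠ[𝓝 x] u)).symm

/-- Truncating the values of `u` near `0` makes the support compact at an arbitrarily small cost:
the truncated densities converge to that of `u` where `u ≠ 0`, and where `u = 0` the density of `u`
is nonnegative. -/
lemma exists_memC1c_setIntegral_glDensity_lt (hA : Continuous A) (hb : 0 ≤ b) (hΩ : IsOpen Ω)
    (hΩb : Bornology.IsBounded Ω) (hu : ContDiff ℝ 1 u) (hu0 : ∀ x ∈ frontier Ω, u x = 0)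
    (hc : ∫ x in Ω, glDensity A b u x < c) :
    ∃ w, MemC1c Ω w ∧ ∫ x in Ω, glDensity A b w x < c := by
  obtain ⟨φ, K, hφ, hφK, hφ0, hφid⟩ := exists_contDiff_lipschitzWith_eventuallyEq_id ℂ
  have hφu (n : ℕ) : ContDiff ℝ 1 (φ n ∘ u) := (hφ n).comp hu
  have hint := tendsto_integral_of_dominated_convergence (μ := volume.restrict Ω)
    (fun x => b * (2 * (K * (‖fderiv ℝ u x‖ + ‖A x‖ * ‖u x‖)) ^ 2) +
      (K * ‖u x‖) ^ 2 + (K * ‖u x‖) ^ 4)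
    (fun n => (continuous_glDensity hA b (hφu n)).aestronglyMeasurable)
    (integrableOn_of_continuous_of_isBounded (by
      have := hu.continuous
      have := hu.continuous_fderiv one_ne_zero
      fun_prop) hΩb)
    (fun n => .of_forall fun x => abs_glDensity_comp_le hb ((hφ n).differentiable one_ne_zero _)
      (hφK n) (hφ0 n).eq_of_nhds (hu.differentiable one_ne_zero x))
    (.of_forall fun x => tendsto_glDensity_comp hφ0 hφid hu.continuous.continuousAt)
  have hle : ∫ x in Ω, {x | u x ≠ 0}.indicator (glDensity A b u) x ≤
      ∫ x in Ω, glDensity A b u x := by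
    have hi : IntegrableOn (glDensity A b u) Ω :=
      integrableOn_of_continuous_of_isBounded (continuous_glDensity hA b hu) hΩb
    refine integral_mono (hi.indicator ?_) hi fun x => ?_
    · exact (isOpen_ne_fun hu.continuous continuous_const).measurableSet
    · exact indicator_le_self' (fun y hy => glDensity_nonneg_of_eq_zero hb (by simpa using hy)) x
  obtain ⟨n, hn⟩ := (hint.eventually_lt_const (hle.trans_lt hc)).exists
  refine ⟨_, memC1c_indicator_comp hΩ hΩb hu hu0 (hφ n) (hφ0 n), ?_⟩
  rwa [setIntegral_congr_fun hΩ.measurableSet fun x hx => glDensity_congr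
    (eventually_of_mem (hΩ.mem_nhds hx) fun y hy => indicator_of_mem hy _)]

end Truncation

/-! ### Dirichlet energies of squares -/

section DirichletEnergy

variable {b r : ℝ} {u w : ℝ × ℝ → ℂ}

lemma Qsq_eq_ball (r : ℝ) : Qsq r = Metric.ball 0 (r / 2) := by
  rw [← Prod.mk_zero_zero, ← ball_prod_same, Real.ball_eq_Ioo, Qsq, zero_sub, zero_add, neg_div]

lemma isOpen_Qsq (r : ℝ) : IsOpen (Qsq r) := Qsq_eq_ball r ▸ Metric.isOpen_ball

lemma isBounded_Qsq (r : ℝ) : Bornology.IsBounded (Qsq r) := Qsq_eq_ball r ▸ Metric.isBounded_ball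

lemma volume_real_Qsq (hr : 0 ≤ r) : volume.real (Qsq r) = r ^ 2 := by
  rw [Qsq, Measure.volume_eq_prod, measureReal_prod_prod, Real.volume_real_Ioo_of_le (by linarith)]
  ring

lemma continuous_A₀ : Continuous A₀ := by
  unfold A₀
  fun_prop

lemma neg_half_volume_le_Fsq (hb : 0 ≤ b) (hu : ContDiff ℝ 1 u) :
    -(1 / 2) * volume.real (Qsq r) ≤ Fsq b r u :=
  setIntegral_ge_of_const_le_real (isOpen_Qsq r).measurableSet (isBounded_Qsq r).measure_lt_top.ne
    (fun _ _ => neg_half_le_glDensity hb)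
    (integrableOn_of_continuous_of_isBounded (continuous_glDensity continuous_A₀ b hu)
      (isBounded_Qsq r))

lemma bddBelow_Fsq (hb : 0 ≤ b) : BddBelow (Fsq b r '' {u | MemH10sq r u}) :=
  ⟨_, forall_mem_image.2 fun _ hu => neg_half_volume_le_Fsq hb hu.1⟩

lemma memH10sq_zero : MemH10sq r 0 := ⟨contDiff_const, fun _ _ => rfl⟩

lemma Fsq_zero : Fsq b r 0 = 0 := integral_eq_zero_of_ae (.of_forall fun _ => glDensity_zero)

lemma eD_nonpos (hb : 0 ≤ b) : eD b r ≤ 0 :=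
  csInf_le (bddBelow_Fsq hb) ⟨0, memH10sq_zero, Fsq_zero⟩

lemma neg_half_mul_sq_le_eD (hb : 0 ≤ b) (hr : 0 ≤ r) : -(1 / 2) * r ^ 2 ≤ eD b r :=
  le_csInf ⟨_, 0, memH10sq_zero, rfl⟩ <| forall_mem_image.2 fun _ hu =>
    volume_real_Qsq hr ▸ neg_half_volume_le_Fsq hb hu.1

lemma MemC1c.memH10sq (hw : MemC1c (Qsq r) w) : MemH10sq r w :=
  ⟨hw.contDiff, fun _ hx => hw.eq_zero_of_notMem ((isOpen_Qsq r).frontier_eq ▸ hx).2⟩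

lemma eD_le (hb : 0 ≤ b) (hw : MemC1c (Qsq r) w) : eD b r ≤ ∫ x, glDensity A₀ b w x :=
  hw.setIntegral_glDensity ▸ csInf_le (bddBelow_Fsq hb) ⟨w, hw.memH10sq, rfl⟩

lemma isGLB_eD (hb : 0 ≤ b) :
    IsGLB ((fun w => ∫ x, glDensity A₀ b w x) '' {w | MemC1c (Qsq r) w}) (eD b r) := by
  refine ⟨forall_mem_image.2 fun w hw => eD_le hb hw, fun c hc => ?_⟩
  refine le_csInf ⟨_, 0, memH10sq_zero, rfl⟩ (forall_mem_image.2 fun u hu => ?_)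
  by_contra! huc
  obtain ⟨w, hw, hwc⟩ := exists_memC1c_setIntegral_glDensity_lt continuous_A₀ hb (isOpen_Qsq r)
    (isBounded_Qsq r) hu.1 hu.2 huc
  rw [hw.setIntegral_glDensity] at hwc
  exact (hc ⟨w, hw, rfl⟩).not_gt hwc

end DirichletEnergy

/-! ### Magnetic translations -/

/-- The magnetic translate of `v` by `y`. The phase makes the energy density translate along with
`v` when the potential `A` is additive. -/
def magTranslate (A : ℝ × ℝ → ℝ × ℝ) (y : ℝ × ℝ) (v : ℝ × ℝ → ℂ) (x : ℝ × ℝ) : ℂ :=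
  Complex.exp (((A y).1 * x.1 + (A y).2 * x.2 : ℝ) * Complex.I) * v (x - y)

section MagneticTranslation

variable {A : ℝ × ℝ → ℝ × ℝ} {y : ℝ × ℝ} {v : ℝ × ℝ → ℂ}

lemma norm_magTranslate (A : ℝ × ℝ → ℝ × ℝ) (y : ℝ × ℝ) (v : ℝ × ℝ → ℂ) (x : ℝ × ℝ) :
    ‖magTranslate A y v x‖ = ‖v (x - y)‖ := by
  rw [magTranslate, norm_mul, Complex.norm_exp_ofReal_mul_I, one_mul]

lemma contDiff_magTranslate (A : ℝ × ℝ → ℝ × ℝ) (y : ℝ × ℝ) (hv : ContDiff ℝ 1 v) :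
    ContDiff ℝ 1 (magTranslate A y v) := by
  have hphase : ContDiff ℝ 1 fun x : ℝ × ℝ => (((A y).1 * x.1 + (A y).2 * x.2 : ℝ) : ℂ) :=
    Complex.ofRealCLM.contDiff.comp
      ((contDiff_const.mul contDiff_fst).add (contDiff_const.mul contDiff_snd))
  exact (hphase.mul contDiff_const).cexp.mul (hv.comp (contDiff_id.sub contDiff_const))

lemma tsupport_magTranslate_subset (A : ℝ × ℝ → ℝ × ℝ) (y : ℝ × ℝ) (v : ℝ × ℝ → ℂ) :
    tsupport (magTranslate A y v) ⊆ (· - y) ⁻¹' tsupport v :=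
  Subset.trans (tsupport_mul_subset_right (g := fun x => v (x - y)))
    (tsupport_comp_eq_preimage v (Homeomorph.subRight y)).subset

lemma covDeriv_magTranslate (hA : ∀ x z, A (x + z) = A x + A z) (hv : Differentiable ℝ v)
    (x e : ℝ × ℝ) : covDeriv A (magTranslate A y v) x e =
      Complex.exp (((A y).1 * x.1 + (A y).2 * x.2 : ℝ) * Complex.I) * covDeriv A v (x - y) e := by
  let L : ℝ × ℝ →L[ℝ] ℝ :=
    (A y).1 • ContinuousLinearMap.fst ℝ ℝ ℝ + (A y).2 • ContinuousLinearMap.snd ℝ ℝ ℝ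
  have hphase := ((Complex.ofRealCLM ∘L L).hasFDerivAt (x := x)).mul_const Complex.I |>.cexp
  have htrans := (hv (x - y)).hasFDerivAt.comp x ((hasFDerivAt_id x).sub_const y)
  have hderiv : HasFDerivAt (magTranslate A y v) _ x := hphase.mul htrans
  have hAx : A x = A y + A (x - y) := by rw [← hA, add_sub_cancel]
  rw [covDeriv, covDeriv, hderiv.fderiv, magTranslate, hAx]
  simp [L]
  ring

lemma glDensity_magTranslate (hA : ∀ x z, A (x + z) = A x + A z) (b : ℝ) (hv : Differentiable ℝ v)
    (x : ℝ × ℝ) : glDensity A b (magTranslate A y v) x = glDensity A b v (x - y) := by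
  simp only [glDensity, magGradSq_eq_covDeriv, covDeriv_magTranslate hA hv, norm_magTranslate,
    norm_mul, Complex.norm_exp_ofReal_mul_I, one_mul]

lemma memC1c_magTranslate {Ω : Set (ℝ × ℝ)} (A : ℝ × ℝ → ℝ × ℝ) (y : ℝ × ℝ) (hv : MemC1c Ω v) :
    MemC1c ((· - y) ⁻¹' Ω) (magTranslate A y v) where
  contDiff := contDiff_magTranslate A y hv.contDiff
  hasCompactSupport := (hv.hasCompactSupport.comp_homeomorph (Homeomorph.subRight y)).mul_left
  tsupport_subset := (tsupport_magTranslate_subset A y v).trans (preimage_mono hv.tsupport_subset)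

lemma A₀_add (x y : ℝ × ℝ) : A₀ (x + y) = A₀ x + A₀ y := by
  ext <;> simp only [A₀, Prod.fst_add, Prod.snd_add] <;> ring

end MagneticTranslation

/-! ### Packing and the lower bound -/

lemma eD_le_card_mul_eD {b r R : ℝ} (hb : 0 ≤ b) {ι : Type*} [Fintype ι] {y : ι → ℝ × ℝ}
    (hy : Pairwise fun i j => r ≤ dist (y i) (y j)) (hyR : ∀ i, r / 2 + ‖y i‖ ≤ R / 2) :
    eD b R ≤ Fintype.card ι * eD b r := by
  refine (le_isGLB_iff ((isGLB_eD hb).mul_left (Nat.cast_nonneg _))).2 ?_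
  rintro _ ⟨_, ⟨w, hw, rfl⟩, rfl⟩
  have hpre (i : ι) : (· - y i) ⁻¹' Qsq r = Metric.ball (y i) (r / 2) := by
    rw [Qsq_eq_ball]
    ext x
    simp [dist_eq_norm]
  have hf (i : ι) : MemC1c (Metric.ball (y i) (r / 2)) (magTranslate A₀ (y i) w) :=
    hpre i ▸ memC1c_magTranslate A₀ (y i) hw
  have hfR (i : ι) : MemC1c (Qsq R) (magTranslate A₀ (y i) w) := by
    refine (hf i).mono ?_
    rw [Qsq_eq_ball]
    exact Metric.ball_subset_ball' (by simpa using hyR i)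
  have hdisj : Pairwise fun i j => Disjoint (tsupport (magTranslate A₀ (y i) w))
      (tsupport (magTranslate A₀ (y j) w)) := fun i j hij =>
    (Metric.ball_disjoint_ball (by simpa using hy hij)).mono (hf i).tsupport_subset
      (hf j).tsupport_subset
  calc eD b R ≤ ∫ x, glDensity A₀ b (∑ i, magTranslate A₀ (y i) w) x :=
        eD_le hb (MemC1c.sum fun i _ => hfR i)
    _ = ∑ i, ∫ x, glDensity A₀ b (magTranslate A₀ (y i) w) x := by
      simp only [glDensity_sum hdisj]
      exact integral_finsetSum _ fun i _ => (hfR i).integrable_glDensity continuous_A₀ b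
    _ = ∑ _i : ι, ∫ x, glDensity A₀ b w x := by
      simp only [glDensity_magTranslate A₀_add b (hw.contDiff.differentiable one_ne_zero),
        integral_sub_right_eq_self (glDensity A₀ b w)]
    _ = Fintype.card ι * ∫ x, glDensity A₀ b w x := by simp

lemma eD_natCast_mul_le {b r : ℝ} (hb : 0 ≤ b) (hr : 0 ≤ r) (n : ℕ) :
    eD b (n * r) ≤ n ^ 2 * eD b r := by
  let t (i : Fin n) : ℝ := r * (i - (n - 1) / 2)
  have hsep {i j : Fin n} (hij : i ≠ j) : r ≤ dist (t i) (t j) := by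
    have h1 : (1 : ℝ) ≤ |(i : ℝ) - j| := by
      have : ((i : ℕ) : ℤ) - (j : ℕ) ≠ 0 := sub_ne_zero.2 (by simpa [Fin.ext_iff] using hij)
      exact_mod_cast Int.one_le_abs this
    calc r ≤ r * |(i : ℝ) - j| := le_mul_of_one_le_right hr h1
      _ = dist (t i) (t j) := by
        rw [Real.dist_eq, ← mul_sub, sub_sub_sub_cancel_right, abs_mul, abs_of_nonneg hr]
  have hbound (i : Fin n) : ‖t i‖ ≤ r * ((n - 1) / 2) := by
    have hi : (i : ℝ) + 1 ≤ n := by exact_mod_cast i.2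
    rw [norm_mul, Real.norm_of_nonneg hr, Real.norm_eq_abs]
    exact mul_le_mul_of_nonneg_left (abs_le.2 ⟨by linarith [(i : ℕ).cast_nonneg (α := ℝ)],
      by linarith⟩) hr
  have hdist : Pairwise fun p q : Fin n × Fin n => r ≤ dist (t p.1, t p.2) (t q.1, t q.2) := by
    intro p q hpq
    rcases not_and_or.1 (Prod.ext_iff.not.1 hpq) with h | h
    · exact (hsep h).trans (le_max_left _ _)
    · exact (hsep h).trans (le_max_right _ _)
  have hnorm (p : Fin n × Fin n) : r / 2 + ‖(t p.1, t p.2)‖ ≤ n * r / 2 := by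
    rw [Prod.norm_mk]
    linarith [max_le (hbound p.1) (hbound p.2)]
  simpa [sq] using eD_le_card_mul_eD hb hdist hnorm

lemma le_eD_div_sq {b γ r : ℝ} (hb : 0 ≤ b)
    (hγ : Tendsto (fun R => eD b R / R ^ 2) atTop (𝓝 γ)) (hr : 0 < r) : γ ≤ eD b r / r ^ 2 := by
  have hnr : Tendsto (fun n : ℕ => (n : ℝ) * r) atTop atTop :=
    tendsto_natCast_atTop_atTop.atTop_mul_const hr
  refine le_of_tendsto (hγ.comp hnr) ?_
  filter_upwards [eventually_gt_atTop 0] with n hn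
  have : (0 : ℝ) < n := Nat.cast_pos.2 hn
  calc eD b (n * r) / (n * r) ^ 2 ≤ n ^ 2 * eD b r / (n * r) ^ 2 := by
        gcongr
        exact eD_natCast_mul_le hb hr.le n
    _ = eD b r / r ^ 2 := by field_simp

/-! ### Sliding a cutoff over the plane -/

/-- The squared Euclidean length `|∇χ|²` of the gradient of `χ` (the norm of `fderiv ℝ χ x` would
be dual to the supremum norm on `ℝ × ℝ`). -/
def gradSq (χ : ℝ × ℝ → ℝ) (x : ℝ × ℝ) : ℝ :=
  fderiv ℝ χ x (1, 0) ^ 2 + fderiv ℝ χ x (0, 1) ^ 2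

/-- An upper bound for the energy density, at the point `x`, of `χ` times a magnetic translate of
`v` that carries `z` to `x`. -/
def cutoffDensity (A : ℝ × ℝ → ℝ × ℝ) (b : ℝ) (χ : ℝ × ℝ → ℝ) (v : ℝ × ℝ → ℂ) (x z : ℝ × ℝ) : ℝ :=
  χ x ^ 2 * glDensity A b v z +
    b * χ x * (fderiv ℝ χ x (1, 0) * fderiv ℝ (fun w => ‖v w‖ ^ 2) z (1, 0) +
      fderiv ℝ χ x (0, 1) * fderiv ℝ (fun w => ‖v w‖ ^ 2) z (0, 1)) +
    b * gradSq χ x * ‖v z‖ ^ 2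

section Cutoff

variable {A : ℝ × ℝ → ℝ × ℝ} {b : ℝ} {χ : ℝ × ℝ → ℝ} {u v : ℝ × ℝ → ℂ} {x y : ℝ × ℝ}

lemma gradSq_nonneg (χ : ℝ × ℝ → ℝ) (x : ℝ × ℝ) : 0 ≤ gradSq χ x := by
  unfold gradSq
  positivity

lemma continuous_gradSq (hχ : ContDiff ℝ 1 χ) : Continuous (gradSq χ) := by
  have := hχ.continuous_fderiv one_ne_zero
  unfold gradSq
  fun_prop

lemma fderiv_norm_sq_apply_eq_inner_covDeriv (hu : DifferentiableAt ℝ u x) (e : ℝ × ℝ) :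
    fderiv ℝ (fun z => ‖u z‖ ^ 2) x e = 2 * inner ℝ (u x) (covDeriv A u x e) := by
  have himag (t : ℝ) : inner ℝ (u x) (Complex.I * (t : ℂ) * u x) = 0 := by
    simp [Complex.inner, mul_comm, mul_left_comm]
  rw [hu.hasFDerivAt.norm_sq.fderiv, covDeriv, inner_sub_right, himag]
  simp [mul_add]

lemma norm_covDeriv_smul_sq (hχ : DifferentiableAt ℝ χ x) (hu : DifferentiableAt ℝ u x)
    (e : ℝ × ℝ) : ‖covDeriv A (fun z => χ z • u z) x e‖ ^ 2 = χ x ^ 2 * ‖covDeriv A u x e‖ ^ 2 +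
      χ x * (fderiv ℝ χ x e * fderiv ℝ (fun z => ‖u z‖ ^ 2) x e) +
      fderiv ℝ χ x e ^ 2 * ‖u x‖ ^ 2 := by
  have hsmul : covDeriv A (fun z => χ z • u z) x e =
      χ x • covDeriv A u x e + fderiv ℝ χ x e • u x := by
    rw [covDeriv, covDeriv, fderiv_fun_smul hχ hu]
    simp only [add_apply, smul_apply, ContinuousLinearMap.smulRight_apply, Complex.real_smul]
    ring
  rw [hsmul, norm_add_sq_real, norm_smul, norm_smul, mul_pow, mul_pow, Real.norm_eq_abs, sq_abs,
    Real.norm_eq_abs, sq_abs, fderiv_norm_sq_apply_eq_inner_covDeriv (A := A) hu,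
    real_inner_smul_left, real_inner_smul_right, real_inner_comm]
  ring

lemma glDensity_smul_le (hχ : DifferentiableAt ℝ χ x) (hχ1 : χ x ^ 2 ≤ 1)
    (hu : DifferentiableAt ℝ u x) :
    glDensity A b (fun z => χ z • u z) x ≤ cutoffDensity A b χ u x x := by
  have hquartic : χ x ^ 4 * ‖u x‖ ^ 4 ≤ χ x ^ 2 * ‖u x‖ ^ 4 := by
    gcongr ?_ * _
    nlinarith [sq_nonneg (χ x)]
  have habs : ‖χ x • u x‖ ^ 2 = χ x ^ 2 * ‖u x‖ ^ 2 := by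
    rw [norm_smul, mul_pow, Real.norm_eq_abs, sq_abs]
  have habs4 : ‖χ x • u x‖ ^ 4 = χ x ^ 4 * ‖u x‖ ^ 4 := by
    linear_combination (‖χ x • u x‖ ^ 2 + χ x ^ 2 * ‖u x‖ ^ 2) * habs
  simp only [cutoffDensity, glDensity, magGradSq_eq_covDeriv, norm_covDeriv_smul_sq hχ hu, gradSq,
    habs, habs4]
  linarith

lemma cutoffDensity_magTranslate (hA : ∀ x z, A (x + z) = A x + A z) (hv : Differentiable ℝ v)
    (x z : ℝ × ℝ) :
    cutoffDensity A b χ (magTranslate A y v) x z = cutoffDensity A b χ v x (z - y) := by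
  simp only [cutoffDensity, glDensity_magTranslate hA b hv, norm_magTranslate]
  rw [fderiv_comp_sub (f := fun w => ‖v w‖ ^ 2)]

lemma continuous_cutoffDensity (hA : Continuous A) (b : ℝ) (hχ : ContDiff ℝ 1 χ)
    (hv : ContDiff ℝ 1 v) :
    Continuous fun p : (ℝ × ℝ) × ℝ × ℝ => cutoffDensity A b χ v p.1 p.2 := by
  have := continuous_glDensity hA b hv
  have := continuous_gradSq hχ
  have := hχ.continuous
  have := hχ.continuous_fderiv one_ne_zero
  have := (hv.norm_sq ℝ).continuous_fderiv one_ne_zero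
  have := hv.continuous
  unfold cutoffDensity
  fun_prop

lemma cutoffDensity_eq_zero {z : ℝ × ℝ} (hz : z ∉ tsupport v) : cutoffDensity A b χ v x z = 0 := by
  have hev : (fun w => ‖v w‖ ^ 2) =ᶠ[𝓝 z] fun _ => 0 := by
    filter_upwards [notMem_tsupport_iff_eventuallyEq.1 hz] with w hw
    simp [hw]
  simp [cutoffDensity, glDensity_of_notMem_tsupport hz, hev.fderiv_eq,
    image_eq_zero_of_notMem_tsupport hz]

/-- The terms containing a derivative of `‖v‖ ^ 2` integrate to zero. -/
lemma integral_cutoffDensity {Ω : Set (ℝ × ℝ)} (hA : Continuous A) (b : ℝ) (χ : ℝ × ℝ → ℝ)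
    (hv : MemC1c Ω v) (x : ℝ × ℝ) : ∫ z, cutoffDensity A b χ v x z =
      χ x ^ 2 * (∫ z, glDensity A b v z) + b * gradSq χ x * ∫ z, ‖v z‖ ^ 2 := by
  have hsq : ContDiff ℝ 1 fun z => ‖v z‖ ^ 2 := hv.contDiff.norm_sq ℝ
  have hsupp : HasCompactSupport fun z => ‖v z‖ ^ 2 :=
    hv.hasCompactSupport.comp_left (g := fun w => ‖w‖ ^ 2) (by simp)
  have hderiv (e : ℝ × ℝ) : Integrable fun z => fderiv ℝ (fun w => ‖v w‖ ^ 2) z e :=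
    ((hsq.continuous_fderiv one_ne_zero).clm_apply
      continuous_const).integrable_of_hasCompactSupport (hsupp.fderiv_apply ℝ e)
  let cross (z : ℝ × ℝ) : ℝ := fderiv ℝ χ x (1, 0) * fderiv ℝ (fun w => ‖v w‖ ^ 2) z (1, 0) +
    fderiv ℝ χ x (0, 1) * fderiv ℝ (fun w => ‖v w‖ ^ 2) z (0, 1)
  have hcross : Integrable cross := ((hderiv _).const_mul _).add ((hderiv _).const_mul _)
  have hcross0 : ∫ z, cross z = 0 := by
    rw [integral_add ((hderiv _).const_mul _) ((hderiv _).const_mul _), integral_const_mul,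
      integral_const_mul, integral_fderiv_apply_eq_zero hsq hsupp,
      integral_fderiv_apply_eq_zero hsq hsupp, mul_zero, mul_zero, add_zero]
  have hgl := (hv.integrable_glDensity hA b).const_mul (χ x ^ 2)
  have hgl_cross : Integrable fun z => χ x ^ 2 * glDensity A b v z + b * χ x * cross z :=
    hgl.add (hcross.const_mul _)
  have hmass := (hsq.continuous.integrable_of_hasCompactSupport (μ := volume) hsupp).const_mul
    (b * gradSq χ x)
  rw [← add_zero (χ x ^ 2 * _), ← mul_zero (b * χ x), ← hcross0, ← integral_const_mul,
    ← integral_const_mul, ← integral_const_mul, ← integral_add hgl (hcross.const_mul _),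
    ← integral_add hgl_cross hmass]
  rfl

end Cutoff

section UpperBound

variable {b γ ρ R : ℝ} {χ : ℝ × ℝ → ℝ} {v : ℝ × ℝ → ℂ}

lemma setIntegral_norm_sq_le (hb : 0 ≤ b) (hR : 0 ≤ R) (hv : MemC1c (Qsq R) v) :
    ∫ z, ‖v z‖ ^ 2 ≤ (∫ z, glDensity A₀ b v z) + 2 * R ^ 2 := by
  have hsq : IntegrableOn (fun z => ‖v z‖ ^ 2) (Qsq R) :=
    integrableOn_of_continuous_of_isBounded (hv.contDiff.continuous.norm.pow 2) (isBounded_Qsq R)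
  have htwo : IntegrableOn (fun _ => (2 : ℝ)) (Qsq R) :=
    integrableOn_of_continuous_of_isBounded continuous_const (isBounded_Qsq R)
  have hle : ∫ z in Qsq R, (‖v z‖ ^ 2 - 2) ≤ ∫ z in Qsq R, glDensity A₀ b v z :=
    integral_mono (hsq.sub htwo) (hv.integrable_glDensity continuous_A₀ b).integrableOn
      fun _ => normSq_sub_two_le_glDensity hb
  rw [integral_sub hsq htwo, setIntegral_const, volume_real_Qsq hR, smul_eq_mul,
    hv.setIntegral_glDensity,
    setIntegral_eq_integral_of_forall_compl_eq_zero fun z hz => by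
      simp [hv.eq_zero_of_notMem hz]] at hle
  linarith

lemma eD_le_setIntegral_cutoffDensity (hb : 0 ≤ b) (hχ : ContDiff ℝ 1 χ)
    (hχ0 : ∀ x ∈ frontier (Qsq ρ), χ x = 0) (hχ1 : ∀ x ∈ Qsq ρ, χ x ^ 2 ≤ 1)
    (hv : ContDiff ℝ 1 v) (y : ℝ × ℝ) :
    eD b ρ ≤ ∫ x in Qsq ρ, cutoffDensity A₀ b χ v x (x - y) := by
  have hTv := contDiff_magTranslate A₀ y hv
  have hχTv : ContDiff ℝ 1 fun z => χ z • magTranslate A₀ y v z := hχ.smul hTv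
  have hdens := (continuous_cutoffDensity continuous_A₀ b hχ hTv).comp
    (continuous_id.prodMk continuous_id)
  calc eD b ρ ≤ ∫ x in Qsq ρ, glDensity A₀ b (fun z => χ z • magTranslate A₀ y v z) x :=
        csInf_le (bddBelow_Fsq hb) ⟨_, ⟨hχTv, fun x hx => by simp [hχ0 x hx]⟩, rfl⟩
    _ ≤ ∫ x in Qsq ρ, cutoffDensity A₀ b χ (magTranslate A₀ y v) x x :=
        setIntegral_mono_on
          (integrableOn_of_continuous_of_isBounded (continuous_glDensity continuous_A₀ b hχTv)
            (isBounded_Qsq ρ))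
          (integrableOn_of_continuous_of_isBounded hdens (isBounded_Qsq ρ))
          (isOpen_Qsq ρ).measurableSet fun x hx =>
            glDensity_smul_le (hχ.differentiable one_ne_zero x) (hχ1 x hx)
              (hTv.differentiable one_ne_zero x)
    _ = ∫ x in Qsq ρ, cutoffDensity A₀ b χ v x (x - y) := by
        simp only [cutoffDensity_magTranslate A₀_add (hv.differentiable one_ne_zero)]

/-- Averaging over all translates of a trial state on the large square `Q_R`. -/
lemma eD_mul_add_sq_le (hb : 0 ≤ b) (hρ : 0 ≤ ρ) (hR : 0 ≤ R) (hχ : ContDiff ℝ 1 χ)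
    (hχ0 : ∀ x ∈ frontier (Qsq ρ), χ x = 0) (hχ1 : ∀ x ∈ Qsq ρ, χ x ^ 2 ≤ 1)
    (hv : MemC1c (Qsq R) v) :
    eD b ρ * (ρ + R) ^ 2 ≤ ((∫ x in Qsq ρ, χ x ^ 2) + b * ∫ x in Qsq ρ, gradSq χ x) *
      (∫ z, glDensity A₀ b v z) + 2 * b * (∫ x in Qsq ρ, gradSq χ x) * R ^ 2 := by
  have hK := continuous_cutoffDensity continuous_A₀ b hχ hv.contDiff
  have hχint : IntegrableOn (fun x => χ x ^ 2) (Qsq ρ) :=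
    integrableOn_of_continuous_of_isBounded (hχ.continuous.pow 2) (isBounded_Qsq ρ)
  have hgrad : IntegrableOn (gradSq χ) (Qsq ρ) :=
    integrableOn_of_continuous_of_isBounded (continuous_gradSq hχ) (isBounded_Qsq ρ)
  have hgrad0 : 0 ≤ ∫ x in Qsq ρ, gradSq χ x := integral_nonneg (gradSq_nonneg χ)
  have hswap : ∫ y in Qsq (ρ + R), ∫ x in Qsq ρ, cutoffDensity A₀ b χ v x (x - y) =
      ∫ x in Qsq ρ, ∫ z, cutoffDensity A₀ b χ v x z := by
    simp only [Qsq_eq_ball, add_div]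
    exact setIntegral_ball_setIntegral_ball_sub hK fun x z hz => cutoffDensity_eq_zero fun h =>
      hz (Qsq_eq_ball R ▸ hv.tsupport_subset h)
  calc eD b ρ * (ρ + R) ^ 2
      = ∫ _ in Qsq (ρ + R), eD b ρ := by
        rw [setIntegral_const, volume_real_Qsq (add_nonneg hρ hR), smul_eq_mul, mul_comm]
    _ ≤ ∫ y in Qsq (ρ + R), ∫ x in Qsq ρ, cutoffDensity A₀ b χ v x (x - y) :=
        integral_mono (integrableOn_const (isBounded_Qsq _).measure_lt_top.ne)
          (integrable_sub_prod_restrict hK (isBounded_Qsq _) (isBounded_Qsq _)).integral_prod_left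
          (eD_le_setIntegral_cutoffDensity hb hχ hχ0 hχ1 hv.contDiff)
    _ = (∫ x in Qsq ρ, χ x ^ 2) * (∫ z, glDensity A₀ b v z) +
          b * (∫ x in Qsq ρ, gradSq χ x) * ∫ z, ‖v z‖ ^ 2 := by
        simp only [hswap, integral_cutoffDensity continuous_A₀ b χ hv]
        rw [integral_add (hχint.mul_const _) ((hgrad.const_mul b).mul_const _),
          integral_mul_const, integral_mul_const, integral_const_mul]
    _ ≤ (∫ x in Qsq ρ, χ x ^ 2) * (∫ z, glDensity A₀ b v z) +
          b * (∫ x in Qsq ρ, gradSq χ x) * ((∫ z, glDensity A₀ b v z) + 2 * R ^ 2) := by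
        gcongr
        exact setIntegral_norm_sq_le hb hR hv
    _ = _ := by ring

lemma eD_le_add_of_cutoff (hb : 0 ≤ b) (hρ : 0 ≤ ρ) (hχ : ContDiff ℝ 1 χ)
    (hχ0 : ∀ x ∈ frontier (Qsq ρ), χ x = 0) (hχ1 : ∀ x ∈ Qsq ρ, χ x ^ 2 ≤ 1)
    (hγ : Tendsto (fun R => eD b R / R ^ 2) atTop (𝓝 γ)) :
    eD b ρ ≤ ((∫ x in Qsq ρ, χ x ^ 2) + b * ∫ x in Qsq ρ, gradSq χ x) * γ +
      2 * b * ∫ x in Qsq ρ, gradSq χ x := by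
  set a := ∫ x in Qsq ρ, χ x ^ 2
  set B := ∫ x in Qsq ρ, gradSq χ x
  have : 0 ≤ a := integral_nonneg fun x => sq_nonneg (χ x)
  have : 0 ≤ B := integral_nonneg (gradSq_nonneg χ)
  have hleft : Tendsto (fun R => eD b ρ * (ρ / R + 1) ^ 2) atTop (𝓝 (eD b ρ)) := by
    simpa using (((tendsto_const_nhds (x := ρ)).div_atTop tendsto_id).add_const 1 |>.pow
      2).const_mul (eD b ρ)
  refine le_of_tendsto_of_tendsto hleft ((hγ.const_mul (a + b * B)).add_const (2 * b * B)) ?_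
  filter_upwards [eventually_gt_atTop 0] with R hR
  have hR_le : eD b ρ * (ρ + R) ^ 2 - 2 * b * B * R ^ 2 ≤ (a + b * B) * eD b R := by
    refine (le_isGLB_iff ((isGLB_eD hb).mul_left (by positivity))).2 ?_
    rintro _ ⟨_, ⟨v, hv, rfl⟩, rfl⟩
    exact sub_le_iff_le_add.2 (eD_mul_add_sq_le hb hρ hR.le hχ hχ0 hχ1 hv)
  calc eD b ρ * (ρ / R + 1) ^ 2
      = (eD b ρ * (ρ + R) ^ 2 - 2 * b * B * R ^ 2) / R ^ 2 + 2 * b * B := by field_simp; ring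
    _ ≤ (a + b * B) * eD b R / R ^ 2 + 2 * b * B := by gcongr
    _ = (a + b * B) * (eD b R / R ^ 2) + 2 * b * B := by ring

lemma limit_eD_div_sq_mem_Icc (hb : 0 ≤ b)
    (hγ : Tendsto (fun R => eD b R / R ^ 2) atTop (𝓝 γ)) : γ ∈ Icc (-(1 / 2)) 0 := by
  refine isClosed_Icc.mem_of_tendsto hγ ?_
  filter_upwards [eventually_gt_atTop 0] with R hR
  exact ⟨(le_div_iff₀ (by positivity)).2 (neg_half_mul_sq_le_eD hb hR.le),
    div_nonpos_of_nonpos_of_nonneg (eD_nonpos hb) (sq_nonneg R)⟩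

lemma eD_le_sq_mul_add_of_cutoff (hb : 0 ≤ b) (hρ : 0 ≤ ρ) (hχ : ContDiff ℝ 1 χ)
    (hχ0 : ∀ x ∈ frontier (Qsq ρ), χ x = 0) (hχ1 : ∀ x ∈ Qsq ρ, χ x ^ 2 ≤ 1)
    (hγ : Tendsto (fun R => eD b R / R ^ 2) atTop (𝓝 γ)) :
    eD b ρ ≤ ρ ^ 2 * γ + (1 / 2) * (∫ x in Qsq ρ, (1 - χ x ^ 2)) +
      2 * b * ∫ x in Qsq ρ, gradSq χ x := by
  obtain ⟨hγ_ge, hγ_nonpos⟩ := limit_eD_div_sq_mem_Icc hb hγ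
  have hloss : ∫ x in Qsq ρ, (1 - χ x ^ 2) = ρ ^ 2 - ∫ x in Qsq ρ, χ x ^ 2 := by
    have hone : IntegrableOn (fun _ => (1 : ℝ)) (Qsq ρ) :=
      integrableOn_of_continuous_of_isBounded continuous_const (isBounded_Qsq ρ)
    have hsq : IntegrableOn (fun x => χ x ^ 2) (Qsq ρ) :=
      integrableOn_of_continuous_of_isBounded (hχ.continuous.pow 2) (isBounded_Qsq ρ)
    rw [integral_sub hone hsq, setIntegral_const, volume_real_Qsq hρ, smul_eq_mul, mul_one]
  have hloss_nonneg : 0 ≤ ∫ x in Qsq ρ, (1 - χ x ^ 2) :=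
    setIntegral_nonneg (isOpen_Qsq ρ).measurableSet fun x hx => sub_nonneg.2 (hχ1 x hx)
  have hgrad : 0 ≤ b * ∫ x in Qsq ρ, gradSq χ x :=
    mul_nonneg hb (integral_nonneg (gradSq_nonneg χ))
  have h1 := mul_nonpos_of_nonneg_of_nonpos hgrad hγ_nonpos
  have h2 := mul_nonneg hloss_nonneg (sub_nonneg.2 hγ_ge)
  rw [hloss] at h2 ⊢
  linarith [eD_le_add_of_cutoff hb hρ hχ hχ0 hχ1 hγ]

end UpperBound

/-! ### The polynomial cutoff -/

/-- A cutoff on `Q_r` vanishing on the boundary; the width of its boundary layer is of order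
`r / m`. -/
def polyCutoff (r : ℝ) (m : ℕ) (x : ℝ × ℝ) : ℝ :=
  (1 - (2 / r * x.1) ^ (2 * m)) * (1 - (2 / r * x.2) ^ (2 * m))

section PolyCutoff

variable {b γ r : ℝ} {m : ℕ} {x : ℝ × ℝ}

lemma contDiff_polyCutoff (r : ℝ) (m : ℕ) : ContDiff ℝ 1 (polyCutoff r m) := by
  unfold polyCutoff
  fun_prop

lemma polyCutoff_eq_zero_of_mem_frontier (hr : 0 < r) (hx : x ∈ frontier (Qsq r)) :
    polyCutoff r m x = 0 := by
  have hroot {t : ℝ} (ht : ‖t‖ = r / 2) : 1 - (2 / r * t) ^ (2 * m) = 0 := by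
    have : (2 / r * t) ^ 2 = 1 := by
      rw [mul_pow, ← sq_abs t, ← Real.norm_eq_abs, ht]
      field_simp
    rw [pow_mul, this, one_pow, sub_self]
  rw [Qsq_eq_ball, frontier_ball _ (by positivity), mem_sphere_zero_iff_norm, Prod.norm_def] at hx
  rcases max_choice ‖x.1‖ ‖x.2‖ with h | h
  · rw [polyCutoff, hroot (h.symm.trans hx), zero_mul]
  · rw [polyCutoff, hroot (t := x.2) (h.symm.trans hx), mul_zero]

lemma pow_mem_Icc_of_mem_Qsq (m : ℕ) (hr : 0 < r) (hx : x ∈ Qsq r) :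
    (2 / r * x.1) ^ (2 * m) ∈ Icc (0 : ℝ) 1 ∧ (2 / r * x.2) ^ (2 * m) ∈ Icc (0 : ℝ) 1 := by
  have hpow {t : ℝ} (ht : t ∈ Ioo (-r / 2) (r / 2)) : (2 / r * t) ^ (2 * m) ∈ Icc (0 : ℝ) 1 := by
    have hle : |2 / r * t| ≤ 1 := by
      rw [abs_mul, abs_of_pos (by positivity), div_mul_eq_mul_div, div_le_one hr]
      linarith [abs_le.2 ⟨neg_div 2 r ▸ ht.1.le, ht.2.le⟩]
    rw [pow_mul]
    exact ⟨by positivity, pow_le_one₀ (sq_nonneg _) ((sq_le_one_iff_abs_le_one _).2 hle)⟩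
  exact ⟨hpow hx.1, hpow hx.2⟩

lemma polyCutoff_sq_le_one (hr : 0 < r) (hx : x ∈ Qsq r) : polyCutoff r m x ^ 2 ≤ 1 := by
  obtain ⟨⟨hp0, hp1⟩, ⟨hq0, hq1⟩⟩ := pow_mem_Icc_of_mem_Qsq m hr hx
  refine pow_le_one₀ (mul_nonneg (by linarith) (by linarith)) ?_
  exact mul_le_one₀ (by linarith) (by linarith) (by linarith)

lemma one_sub_polyCutoff_sq_le (hr : 0 < r) (hx : x ∈ Qsq r) :
    1 - polyCutoff r m x ^ 2 ≤ 2 * ((2 / r * x.1) ^ (2 * m) + (2 / r * x.2) ^ (2 * m)) := by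
  obtain ⟨⟨hp0, -⟩, ⟨hq0, -⟩⟩ := pow_mem_Icc_of_mem_Qsq m hr hx
  have hle : 1 - polyCutoff r m x ≤ (2 / r * x.1) ^ (2 * m) + (2 / r * x.2) ^ (2 * m) := by
    rw [polyCutoff]
    linarith [mul_nonneg hp0 hq0]
  linarith [sq_nonneg (1 - polyCutoff r m x)]

lemma hasDerivAt_one_sub_pow (r : ℝ) (m : ℕ) (t : ℝ) :
    HasDerivAt (fun t : ℝ => 1 - (2 / r * t) ^ (2 * m))
      (-(4 * m / r * (2 / r * t) ^ (2 * m - 1))) t := by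
  have hlin : HasDerivAt (fun t : ℝ => 2 / r * t) (2 / r) t := by
    simpa using (hasDerivAt_id t).const_mul (2 / r)
  refine ((hlin.pow (2 * m)).const_sub 1).congr_deriv ?_
  push_cast
  ring

lemma gradSq_polyCutoff_le (hr : 0 < r) (hx : x ∈ Qsq r) :
    gradSq (polyCutoff r m) x ≤ 16 * m ^ 2 / r ^ 2 *
      ((2 / r * x.1) ^ (2 * (2 * m - 1)) + (2 / r * x.2) ^ (2 * (2 * m - 1))) := by
  obtain ⟨⟨hp0, hp1⟩, ⟨hq0, hq1⟩⟩ := pow_mem_Icc_of_mem_Qsq m hr hx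
  have hfst : HasFDerivAt (fun x : ℝ × ℝ => 1 - (2 / r * x.1) ^ (2 * m)) _ x :=
    (hasDerivAt_one_sub_pow r m x.1).comp_hasFDerivAt x (ContinuousLinearMap.fst ℝ ℝ ℝ).hasFDerivAt
  have hsnd : HasFDerivAt (fun x : ℝ × ℝ => 1 - (2 / r * x.2) ^ (2 * m)) _ x :=
    (hasDerivAt_one_sub_pow r m x.2).comp_hasFDerivAt x (ContinuousLinearMap.snd ℝ ℝ ℝ).hasFDerivAt
  have hderiv : HasFDerivAt (polyCutoff r m) _ x := hfst.mul hsnd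
  have hfactor {p : ℝ} (h0 : 0 ≤ p) (h1 : p ≤ 1) : (1 - p) ^ 2 ≤ 1 :=
    pow_le_one₀ (by linarith) (by linarith)
  have hterm {p : ℝ} (h0 : 0 ≤ p) (h1 : p ≤ 1) (t : ℝ) :
      ((1 - p) * -(4 * m / r * t ^ (2 * m - 1))) ^ 2 ≤
        16 * m ^ 2 / r ^ 2 * t ^ (2 * (2 * m - 1)) := by
    calc ((1 - p) * -(4 * m / r * t ^ (2 * m - 1))) ^ 2
        = (1 - p) ^ 2 * (16 * m ^ 2 / r ^ 2 * t ^ (2 * (2 * m - 1))) := by ring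
      _ ≤ 16 * m ^ 2 / r ^ 2 * t ^ (2 * (2 * m - 1)) :=
        mul_le_of_le_one_left (mul_nonneg (by positivity) ((even_two_mul _).pow_nonneg t))
          (hfactor h0 h1)
  rw [gradSq, hderiv.fderiv]
  simpa [mul_add] using add_le_add (hterm hq0 hq1 (2 / r * x.1)) (hterm hp0 hp1 (2 / r * x.2))

lemma setIntegral_Ioo_pow (hr : 0 < r) (k : ℕ) :
    ∫ t in Ioo (-r / 2) (r / 2), (2 / r * t) ^ (2 * k) = r / (2 * k + 1) := by
  rw [← integral_Ioc_eq_integral_Ioo, ← intervalIntegral.integral_of_le (by linarith),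
    intervalIntegral.integral_comp_mul_left (fun s => s ^ (2 * k)) (by positivity), integral_pow]
  have h1 : 2 / r * (r / 2) = 1 := by field_simp
  have h2 : 2 / r * (-r / 2) = -1 := by field_simp
  rw [h1, h2, one_pow, (odd_two_mul_add_one k).neg_one_pow, smul_eq_mul]
  push_cast
  field_simp
  norm_num

lemma setIntegral_Qsq_pow_add_pow (hr : 0 < r) (k : ℕ) :
    ∫ x in Qsq r, ((2 / r * x.1) ^ (2 * k) + (2 / r * x.2) ^ (2 * k)) =
      2 * r ^ 2 / (2 * k + 1) := by
  have hone : ∫ _ in Ioo (-r / 2) (r / 2), (1 : ℝ) = r := by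
    simpa using setIntegral_Ioo_pow hr 0
  have hfst : ∫ x in Qsq r, (2 / r * x.1) ^ (2 * k) = r / (2 * k + 1) * r := by
    rw [Qsq, Measure.volume_eq_prod]
    simpa [hone, setIntegral_Ioo_pow hr] using setIntegral_prod_mul (μ := volume) (ν := volume)
      (fun t : ℝ => (2 / r * t) ^ (2 * k)) (fun _ : ℝ => (1 : ℝ)) (Ioo (-r / 2) (r / 2))
      (Ioo (-r / 2) (r / 2))
  have hsnd : ∫ x in Qsq r, (2 / r * x.2) ^ (2 * k) = r * (r / (2 * k + 1)) := by
    rw [Qsq, Measure.volume_eq_prod]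
    simpa [hone, setIntegral_Ioo_pow hr] using setIntegral_prod_mul (μ := volume) (ν := volume)
      (fun _ : ℝ => (1 : ℝ)) (fun t : ℝ => (2 / r * t) ^ (2 * k)) (Ioo (-r / 2) (r / 2))
      (Ioo (-r / 2) (r / 2))
  rw [integral_add
    (integrableOn_of_continuous_of_isBounded (by fun_prop) (isBounded_Qsq r))
    (integrableOn_of_continuous_of_isBounded (by fun_prop) (isBounded_Qsq r)), hfst, hsnd]
  ring

lemma setIntegral_one_sub_polyCutoff_sq_le (hr : 0 < r) (m : ℕ) :
    ∫ x in Qsq r, (1 - polyCutoff r m x ^ 2) ≤ 4 * r ^ 2 / (2 * m + 1) := by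
  have := (contDiff_polyCutoff r m).continuous
  calc ∫ x in Qsq r, (1 - polyCutoff r m x ^ 2)
      ≤ ∫ x in Qsq r, 2 * ((2 / r * x.1) ^ (2 * m) + (2 / r * x.2) ^ (2 * m)) :=
        setIntegral_mono_on
          (integrableOn_of_continuous_of_isBounded (by fun_prop) (isBounded_Qsq r))
          (integrableOn_of_continuous_of_isBounded (by fun_prop) (isBounded_Qsq r))
          (isOpen_Qsq r).measurableSet fun _ => one_sub_polyCutoff_sq_le hr
    _ = 4 * r ^ 2 / (2 * m + 1) := by
        rw [integral_const_mul, setIntegral_Qsq_pow_add_pow hr]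
        ring

lemma setIntegral_gradSq_polyCutoff_le (hr : 0 < r) (hm : 1 ≤ m) :
    ∫ x in Qsq r, gradSq (polyCutoff r m) x ≤ 32 * m ^ 2 / (4 * m - 1) := by
  have := continuous_gradSq (contDiff_polyCutoff r m)
  calc ∫ x in Qsq r, gradSq (polyCutoff r m) x
      ≤ ∫ x in Qsq r, 16 * m ^ 2 / r ^ 2 *
          ((2 / r * x.1) ^ (2 * (2 * m - 1)) + (2 / r * x.2) ^ (2 * (2 * m - 1))) :=
        setIntegral_mono_on
          (integrableOn_of_continuous_of_isBounded (by fun_prop) (isBounded_Qsq r))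
          (integrableOn_of_continuous_of_isBounded (by fun_prop) (isBounded_Qsq r))
          (isOpen_Qsq r).measurableSet fun _ => gradSq_polyCutoff_le hr
    _ = 32 * m ^ 2 / (4 * m - 1) := by
        rw [integral_const_mul, setIntegral_Qsq_pow_add_pow hr, Nat.cast_sub (by lia)]
        push_cast
        field_simp
        ring

lemma eD_le_sq_mul_add_of_natCast (hb : 0 ≤ b) (hr : 0 < r) (hm : 1 ≤ m)
    (hγ : Tendsto (fun R => eD b R / R ^ 2) atTop (𝓝 γ)) :
    eD b r ≤ r ^ 2 * γ + r ^ 2 / m + 64 / 3 * (b * m) := by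
  have hm' : (1 : ℝ) ≤ m := Nat.one_le_cast.2 hm
  calc eD b r ≤ r ^ 2 * γ + (1 / 2) * (∫ x in Qsq r, (1 - polyCutoff r m x ^ 2)) +
        2 * b * ∫ x in Qsq r, gradSq (polyCutoff r m) x :=
        eD_le_sq_mul_add_of_cutoff hb hr.le (contDiff_polyCutoff r m)
          (fun _ => polyCutoff_eq_zero_of_mem_frontier hr) (fun _ => polyCutoff_sq_le_one hr) hγ
    _ ≤ r ^ 2 * γ + (1 / 2) * (4 * r ^ 2 / (2 * m)) + 2 * b * (32 * m ^ 2 / (3 * m)) := by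
        gcongr
        · refine (setIntegral_one_sub_polyCutoff_sq_le hr m).trans ?_
          gcongr
          linarith
        · refine (setIntegral_gradSq_polyCutoff_le hr hm).trans ?_
          gcongr
          linarith
    _ = r ^ 2 * γ + r ^ 2 / m + 64 / 3 * (b * m) := by field_simp; ring

end PolyCutoff

lemma eD_div_sq_le {b γ r : ℝ} (hb : 0 < b)
    (hγ : Tendsto (fun R => eD b R / R ^ 2) atTop (𝓝 γ)) (hr : 0 < r) :
    eD b r / r ^ 2 ≤ γ + 44 * √b / r := by
  have hs : 0 < √b := Real.sqrt_pos.2 hb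
  rcases le_total r √b with h | h
  · have hnonpos : eD b r / r ^ 2 ≤ 0 :=
      div_nonpos_of_nonpos_of_nonneg (eD_nonpos hb.le) (sq_nonneg r)
    have hlarge : 44 ≤ 44 * √b / r := (le_div_iff₀ hr).2 (by linarith)
    linarith [(limit_eD_div_sq_mem_Icc hb.le hγ).1]
  · set m := ⌈r / √b⌉₊
    have hratio : 1 ≤ r / √b := (one_le_div hs).2 h
    have hm_ge : r / √b ≤ m := Nat.le_ceil _
    have hm_le : m ≤ 2 * (r / √b) := by linarith [Nat.ceil_lt_add_one (zero_le_one.trans hratio)]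
    have hm : 1 ≤ m := Nat.one_le_ceil_iff.2 (zero_lt_one.trans_le hratio)
    have hsq : √b ^ 2 = b := Real.sq_sqrt hb.le
    have henergy : eD b r ≤ r ^ 2 * γ + 44 * (r * √b) := by
      calc eD b r ≤ r ^ 2 * γ + r ^ 2 / m + 64 / 3 * (b * m) :=
            eD_le_sq_mul_add_of_natCast hb.le hr hm hγ
        _ ≤ r ^ 2 * γ + r ^ 2 / (r / √b) + 64 / 3 * (√b ^ 2 * (2 * (r / √b))) := by
            rw [hsq]
            gcongr
        _ = r ^ 2 * γ + (1 + 128 / 3) * (r * √b) := by field_simp; ring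
        _ ≤ r ^ 2 * γ + 44 * (r * √b) := by gcongr; norm_num
    calc eD b r / r ^ 2 ≤ (r ^ 2 * γ + 44 * (r * √b)) / r ^ 2 := by gcongr
      _ = γ + 44 * √b / r := by field_simp

theorem eD_estimate_general {b γ : ℝ} (hb : 0 < b)
    (hγ : Tendsto (fun R => eD b R / R ^ 2) atTop (𝓝 γ)) {r : ℝ} (hr : 0 < r) :
    γ ≤ eD b r / r ^ 2 ∧ eD b r / r ^ 2 ≤ γ + 44 * √b / r :=
  ⟨le_eD_div_sq hb.le hγ hr, eD_div_sq_le hb hγ hr⟩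

/-- `g(b) ≤ e_D(b,r)/r² ≤ g(b) + C √b / r` for all `r ≥ 1`, `b > 0`. -/
theorem eD_estimate (g : ℝ → ℝ) (hg : IsLimitG g) :
    ∃ C > (0:ℝ), ∀ r : ℝ, 1 ≤ r → ∀ b : ℝ, 0 < b →
      g b ≤ eD b r / r ^ 2 ∧ eD b r / r ^ 2 ≤ g b + C * Real.sqrt b / r :=
  ⟨44, by norm_num, fun _ hr b hb => eD_estimate_general hb (hg b hb) (by linarith)⟩

end
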